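/- A finite simple graph G is strongly chordal if and only if every induced subgraph of G on a nonempty vertex set contains a simple vertex. -/

import Mathlib

open SimpleGraph

variable {V : Type*} {W : Type*}

/-- The convex hull of `S`: the smallest convex set containing `S`. -/
def chull (Cvx : Set V → Prop) (S : Set V) : Set V := ⋂₀ {T | S ⊆ T ∧ Cvx T}

/-- The set of extreme vertices of `S`. -/
def extremeSet (Cvx : Set V → Prop) (S : Set V) : Set V := {x | x ∈ S ∧ Cvx (S \ {x})}

/-- A convexity is a convex geometry if every convex set is the convex hull
of its extreme vertices. -/
def IsConvexGeometry (Cvx : Set V → Prop) : Prop :=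
  ∀ S : Set V, Cvx S → S = chull Cvx (extremeSet Cvx S)

/-- Convexity induced by a system of p-walks: `S` is convex iff every vertex
lying on a p-walk between two vertices of `S` belongs to `S`. -/
def PConvex (G : SimpleGraph V) (P : ∀ ⦃u v : V⦄, G.Walk u v → Prop) (S : Set V) : Prop :=
  ∀ ⦃u v : V⦄, u ∈ S → v ∈ S → ∀ w : G.Walk u v, P w → ∀ x ∈ w.support, x ∈ S

/-- `x` and `y` appear consecutively (in either order) in the list `l`. -/
def consecIn (l : List V) (x y : V) : Prop := [x, y] <:+: l ∨ [y, x] <:+: l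

/-- An induced path: a path such that the only edges of `G` between its vertices
are the consecutive ones. -/
def IsInducedPathW (G : SimpleGraph V) {u v : V} (w : G.Walk u v) : Prop :=
  w.IsPath ∧ ∀ x ∈ w.support, ∀ y ∈ w.support, G.Adj x y → consecIn w.support x y

/-- An induced cycle: a cycle such that the only edges of `G` between its vertices
are the consecutive (cyclically) ones. -/
def IsInducedCycleW (G : SimpleGraph V) {u : V} (w : G.Walk u u) : Prop :=
  w.IsCycle ∧ ∀ x ∈ w.support, ∀ y ∈ w.support, G.Adj x y → consecIn w.support x y

/-- A graph is chordal if it has no induced cycle of length at least 4. -/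
def Chordal (G : SimpleGraph V) : Prop :=
  ¬ ∃ (u : V) (w : G.Walk u u), IsInducedCycleW G w ∧ 4 ≤ w.length

/-- The cycle `w` has an odd chord: an edge of `G` joining two vertices of the cycle
whose distance along the cycle is odd and greater than 1. -/
def HasOddChord (G : SimpleGraph V) {u : V} (w : G.Walk u u) : Prop :=
  ∃ i j : ℕ, ∃ hi : i < w.support.length, ∃ hj : j < w.support.length, i < j ∧
    G.Adj (w.support.get ⟨i, hi⟩) (w.support.get ⟨j, hj⟩) ∧
    Odd (min (j - i) (w.length - (j - i))) ∧ 1 < min (j - i) (w.length - (j - i))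

/-- A graph is strongly chordal if it is chordal and every even cycle of length
at least 6 has an odd chord. -/
def StronglyChordal (G : SimpleGraph V) : Prop :=
  Chordal G ∧ ∀ (u : V) (w : G.Walk u u), w.IsCycle → Even w.length → 6 ≤ w.length →
    HasOddChord G w

/-- Closed neighborhood `N[v]`. -/
def closedNbhd (G : SimpleGraph V) (v : V) : Set V := insert v (G.neighborSet v)

/-- A vertex is simple if the closed neighborhoods of its closed neighbors form a
family totally ordered by inclusion. -/
def SimpleVtx (G : SimpleGraph V) (v : V) : Prop :=
  ∀ u ∈ closedNbhd G v, ∀ w ∈ closedNbhd G v,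
    closedNbhd G u ⊆ closedNbhd G w ∨ closedNbhd G w ⊆ closedNbhd G u

/-- A vertex is simplicial if its closed neighborhood is a clique. -/
def SimplicialVtx (G : SimpleGraph V) (v : V) : Prop :=
  G.IsClique (closedNbhd G v)

/-- An even-chorded path: a path with no odd chord and such that no endpoint
lies in a chord. -/
def IsEvenChorded (G : SimpleGraph V) {u v : V} (w : G.Walk u v) : Prop :=
  w.IsPath ∧ ∀ i j : ℕ, ∀ hi : i < w.support.length, ∀ hj : j < w.support.length,
    i + 1 < j → G.Adj (w.support.get ⟨i, hi⟩) (w.support.get ⟨j, hj⟩) →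
      Even (j - i) ∧ 0 < i ∧ j < w.support.length - 1

/-- A tolled walk `u₀u₁…u_k`: `u₀uᵢ ∈ E(G)` implies `i = 1` and `u_ju_k ∈ E(G)`
implies `j = k - 1`. -/
def IsTolledWalk (G : SimpleGraph V) {u v : V} (w : G.Walk u v) : Prop :=
  ∀ i : ℕ, ∀ hi : i < w.support.length,
    (G.Adj u (w.support.get ⟨i, hi⟩) → i = 1) ∧
    (G.Adj (w.support.get ⟨i, hi⟩) v → i = w.support.length - 2)

/-- A weakly toll walk `u₀u₁…u_k`: `u₀uᵢ ∈ E(G)` implies `uᵢ = u₁` and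
`u_ju_k ∈ E(G)` implies `u_j = u_{k-1}`. -/
def IsWeaklyTollWalk (G : SimpleGraph V) {u v : V} (w : G.Walk u v) : Prop :=
  ∀ i : ℕ, ∀ hi : i < w.support.length,
    (G.Adj u (w.support.get ⟨i, hi⟩) → w.support.get ⟨i, hi⟩ = w.support.getD 1 u) ∧
    (G.Adj (w.support.get ⟨i, hi⟩) v → w.support.get ⟨i, hi⟩ = w.support.getD (w.support.length - 2) v)

/-- An interval graph: vertices can be assigned nonempty closed real intervals so that
distinct vertices are adjacent iff the intervals intersect. -/
def IsIntervalGraph (G : SimpleGraph V) : Prop :=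
  ∃ a b : V → ℝ, (∀ v, a v ≤ b v) ∧
    ∀ u v : V, u ≠ v →
      (G.Adj u v ↔ (Set.Icc (a u) (b u) ∩ Set.Icc (a v) (b v)).Nonempty)

/-- A proper interval graph: an interval model in which no interval properly
contains another. -/
def IsProperIntervalGraph (G : SimpleGraph V) : Prop :=
  ∃ a b : V → ℝ, (∀ v, a v ≤ b v) ∧
    (∀ u v : V, u ≠ v →
      (G.Adj u v ↔ (Set.Icc (a u) (b u) ∩ Set.Icc (a v) (b v)).Nonempty)) ∧
    ∀ u v : V, ¬ (Set.Icc (a u) (b u) ⊂ Set.Icc (a v) (b v))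

/-- An end vertex: some interval model in which its interval is an end interval. -/
def IsEndVertex (G : SimpleGraph V) (x : V) : Prop :=
  ∃ a b : V → ℝ, (∀ v, a v ≤ b v) ∧
    (∀ u v : V, u ≠ v →
      (G.Adj u v ↔ (Set.Icc (a u) (b u) ∩ Set.Icc (a v) (b v)).Nonempty)) ∧
    ((∀ v, a x ≤ a v) ∨ (∀ v, b v ≤ b x))

/-- `G` contains an induced subgraph isomorphic to `H`. -/
def HasInducedSubgraphIso (G : SimpleGraph V) (H : SimpleGraph W) : Prop :=
  ∃ f : W ↪ V, ∀ a b : W, G.Adj (f a) (f b) ↔ H.Adj a b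

def gemGraph : SimpleGraph (Fin 5) :=
  SimpleGraph.fromRel fun a b =>
    ((a : ℕ), (b : ℕ)) ∈ [(0,1),(1,2),(2,3),(4,0),(4,1),(4,2),(4,3)]

def houseGraph : SimpleGraph (Fin 5) :=
  SimpleGraph.fromRel fun a b =>
    ((a : ℕ), (b : ℕ)) ∈ [(0,1),(1,2),(2,3),(0,3),(0,4),(1,4)]

def dominoGraph : SimpleGraph (Fin 6) :=
  SimpleGraph.fromRel fun a b =>
    ((a : ℕ), (b : ℕ)) ∈ [(0,1),(1,2),(2,3),(0,3),(2,4),(4,5),(3,5)]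

def aGraph : SimpleGraph (Fin 6) :=
  SimpleGraph.fromRel fun a b =>
    ((a : ℕ), (b : ℕ)) ∈ [(0,1),(1,2),(2,3),(0,3),(2,4),(3,5)]

/-- A triangle path: a path such that any two of its vertices at distance
greater than 2 along the path are non-adjacent in `G`. -/
def IsTrianglePath (G : SimpleGraph V) {u v : V} (w : G.Walk u v) : Prop :=
  w.IsPath ∧ ∀ i j : ℕ, ∀ hi : i < w.support.length, ∀ hj : j < w.support.length,
    i + 2 < j → ¬ G.Adj (w.support.get ⟨i, hi⟩) (w.support.get ⟨j, hj⟩)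

/-- `S` is `H`-free convex. -/
def HFreeConvex [Fintype W] (G : SimpleGraph V) (H : SimpleGraph W) (S : Set V) : Prop :=
  ∀ (S' : Finset V), ↑S' ⊆ S → S'.card = Fintype.card W - 1 →
    ∀ x : V, Nonempty ((G.induce (↑S' ∪ {x} : Set V)) ≃g H) → x ∈ S

/-- `a b c d` is an induced path on four vertices of `G`. -/
def InducedP4 (G : SimpleGraph V) (a b c d : V) : Prop :=
  G.Adj a b ∧ G.Adj b c ∧ G.Adj c d ∧ ¬ G.Adj a c ∧ ¬ G.Adj a d ∧ ¬ G.Adj b d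

/-- Every connected component of `G` is a star. -/
def StarForest (G : SimpleGraph V) : Prop :=
  ∀ v : V, ∃ c : V, G.Reachable v c ∧ (∀ x, G.Reachable c x → x ≠ c → G.Adj c x) ∧
    ∀ x y, G.Adj c x → G.Adj c y → ¬ G.Adj x y

/-- An induced `n`-gem in `G`: `x 0, …, x n` is an induced path and `u` is adjacent
to all of them, the whole forming an induced subgraph of `G`. -/
def IsInducedNGem (G : SimpleGraph V) (n : ℕ) (x : Fin (n + 1) → V) (u : V) : Prop :=
  Function.Injective x ∧ (∀ i, x i ≠ u) ∧
  (∀ i j, G.Adj (x i) (x j) ↔ ((i : ℕ) + 1 = (j : ℕ) ∨ (j : ℕ) + 1 = (i : ℕ))) ∧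
  (∀ i, G.Adj u (x i))

/-- The induced `n`-gem is solved: there is an induced path of length 3 in `G`
connecting `x 0` and `x n` that avoids `u`. -/
def GemSolved (G : SimpleGraph V) (n : ℕ) (x : Fin (n + 1) → V) (u : V) : Prop :=
  ∃ w : G.Walk (x 0) (x (Fin.last n)), IsInducedPathW G w ∧ w.length = 3 ∧ u ∉ w.support

/-!
Consider the incidence graph between the vertices of `G`, as points, and their closed
neighbourhoods, as blocks. If `G` is strongly chordal, this graph has no induced cycle of length at
least six: one through both copies of a vertex contradicts chordality, and any other one projects to
an even cycle of `G`, an odd chord of which would be a chord of the original cycle. In an incidence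
graph without such cycles, blocks satisfy a Helly-type property: if the points of a block `e` are
each covered by a block of one connected region beyond `e`, then one block of that region covers
them all. For `e` of maximal trace this is impossible, so the points covered by the region form a
smaller set, and induction yields a point beyond `e` whose blocks have traces forming a chain. In
an induced subgraph of `G`, such a point is a simple vertex.

Conversely, let `x` be a simple vertex of the subgraph induced on a cycle. The closed neighbourhoods
of the two neighbours of `x` on the cycle are comparable, so these neighbours are adjacent, and one
of them is adjacent to the successor of the other; the latter edge is a chord of distance three.
-/

section InducedWalks

variable {G : SimpleGraph V} {a b u v : V}

theorem consecIn_support_iff_mem_edges (p : G.Walk u v) {x y : V} :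
    consecIn p.support x y ↔ s(x, y) ∈ p.edges := by
  rw [consecIn, p.infix_support_iff_mem_edges]

theorem isInducedCycleW_iff_isCycle_and_isChordless {w : G.Walk u u} :
    IsInducedCycleW G w ↔ w.IsCycle ∧ w.IsChordless := by
  simp only [IsInducedCycleW, consecIn_support_iff_mem_edges,
    Walk.isChordless_iff_forall_mem_edges]
  grind

theorem exists_isPath_isChordless_support_subset (q : G.Walk u v) :
    ∃ p : G.Walk u v, p.IsPath ∧ p.IsChordless ∧ p.support ⊆ q.support := by
  classical
  obtain ⟨p, hp, hmin⟩ := exists_minimalFor_of_wellFoundedLT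
    (fun p : G.Walk u v ↦ p.support ⊆ q.support) Walk.length ⟨q, List.Subset.refl _⟩
  replace hmin : ∀ r : G.Walk u v, r.support ⊆ p.support → p.length ≤ r.length := fun r hr ↦
    (le_total p.length r.length).elim id (hmin (List.Subset.trans hr hp))
  refine ⟨p, ?_, ?_, hp⟩
  · rw [← p.bypass_eq_self_of_length_le_length_bypass (hmin _ p.support_bypass_subset_support)]
    exact p.bypass_isPath
  have mem_edges_of_lt {i j : ℕ} (hij : i < j) (hj : j ≤ p.length)
      (h : G.Adj (p.getVert i) (p.getVert j)) : s(p.getVert i, p.getVert j) ∈ p.edges := by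
    have hlen := hmin ((p.take i).append (.cons h (p.drop j))) (by
      rw [Walk.support_append, Walk.support_cons, List.tail_cons]
      exact List.append_subset.2
        ⟨(p.isSubwalk_take i).support_subset, (p.isSubwalk_drop j).support_subset⟩)
    rw [Walk.length_append, Walk.length_cons, Walk.take_length, Walk.drop_length] at hlen
    obtain rfl : j = i + 1 := by lia
    exact p.mk_mem_edges_iff_exists.2 ⟨i, hj, rfl⟩
  refine Walk.isChordless_iff_forall_mem_edges.2 fun x y hx hy hxy ↦ ?_
  obtain ⟨i, rfl, hi⟩ := Walk.mem_support_iff_exists_getVert.1 hx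
  obtain ⟨j, rfl, hj⟩ := Walk.mem_support_iff_exists_getVert.1 hy
  rcases lt_trichotomy i j with hij | rfl | hij
  · exact mem_edges_of_lt hij hj hxy
  · exact (hxy.ne rfl).elim
  · exact Sym2.eq_swap ▸ mem_edges_of_lt hij hi hxy.symm

theorem isInducedCycleW_cons_concat {p : G.Walk a b} (hp : p.IsPath) (hc : p.IsChordless)
    (hva : G.Adj v a) (hbv : G.Adj b v) (hab : a ≠ b) (hv : v ∉ p.support)
    (hadj : ∀ x ∈ p.support, G.Adj v x → x = a ∨ x = b) :
    IsInducedCycleW G (.cons hva (p.concat hbv)) := by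
  have hva_notMem : s(v, a) ∉ p.edges := fun h ↦ hv (p.fst_mem_support_of_mem_edges h)
  refine isInducedCycleW_iff_isCycle_and_isChordless.2
    ⟨Walk.cons_isCycle_iff _ _ |>.2 ⟨hp.concat hv hbv, ?_⟩,
      Walk.isChordless_iff_forall_mem_edges.2 fun x y hx hy hxy ↦ ?_⟩
  · grind [Walk.edges_concat]
  have mem_edges_of_adj {z : V} (hz : z ∈ p.support) (h : G.Adj v z) :
      s(v, z) ∈ (Walk.cons hva (p.concat hbv)).edges := by
    rcases hadj z hz h with rfl | rfl <;> simp [Walk.edges_concat]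
  have mem_support {z : V} (hz : z ∈ (Walk.cons hva (p.concat hbv)).support) :
      z = v ∨ z ∈ p.support := by
    simpa [Walk.support_concat, or_comm] using hz
  rcases mem_support hx with rfl | hxp <;> rcases mem_support hy with rfl | hyp
  · exact (hxy.ne rfl).elim
  · exact mem_edges_of_adj hyp hxy
  · exact Sym2.eq_swap ▸ mem_edges_of_adj hxp hxy.symm
  · simp [Walk.edges_concat, hc.mem_edges hxp hyp hxy]

theorem Chordal.adj_of_walk (hG : Chordal G) (hva : G.Adj v a) (hvb : G.Adj v b) (hab : a ≠ b)
    (q : G.Walk a b) (hv : v ∉ q.support)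
    (hadj : ∀ x ∈ q.support, G.Adj v x → x = a ∨ x = b) : G.Adj a b := by
  obtain ⟨p, hp, hc, hpq⟩ := exists_isPath_isChordless_support_subset q
  have hcycle := isInducedCycleW_cons_concat hp hc hva hvb.symm hab (fun h ↦ hv (hpq h))
    fun x hx ↦ hadj x (hpq hx)
  have hlen : p.length < 2 := by
    by_contra! h
    exact hG ⟨v, _, hcycle, by simpa using h⟩
  have hpos : p.length ≠ 0 := fun h ↦ hab (Walk.eq_of_length_eq_zero h)
  exact Walk.adj_of_length_eq_one (p := p) (by lia)

end InducedWalks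

section InducedCycles

variable {G : SimpleGraph V} {s t u v : V} {w : G.Walk u u}

theorem isCycle_map_of_injOn {G' : SimpleGraph W} {w : G.Walk u u} (hw : w.IsCycle) (f : G →g G')
    (hf : Set.InjOn f {x | x ∈ w.support}) : (w.map f).IsCycle := by
  have hnil : ¬ (w.map f).Nil := by simpa [Walk.nil_map_iff] using hw.not_nil
  rw [Walk.isCycle_iff_isPath_tail_and_le_length, Walk.isPath_def,
    Walk.support_tail_of_not_nil _ hnil, Walk.support_map, ← List.map_tail, Walk.length_map]
  exact ⟨hw.support_nodup.map_on fun x hx y hy ↦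
    hf (List.mem_of_mem_tail hx) (List.mem_of_mem_tail hy), hw.three_le_length⟩

theorem getVert_transfer {H : SimpleGraph V} (p : G.Walk u v) (hp : ∀ e ∈ p.edges, e ∈ H.edgeSet)
    (i : ℕ) : (p.transfer H hp).getVert i = p.getVert i := by
  induction p generalizing i with
  | nil => rfl
  | cons h p ih =>
    cases i
    · simp
    · exact ih _ _

theorem IsInducedCycleW.reverse (hw : IsInducedCycleW G w) : IsInducedCycleW G w.reverse := by
  rw [isInducedCycleW_iff_isCycle_and_isChordless, Walk.isChordless_iff_forall_mem_edges] at hw ⊢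
  exact ⟨hw.1.reverse, by simpa using hw.2⟩

theorem IsInducedCycleW.rotate [DecidableEq V] (hw : IsInducedCycleW G w) (hs : s ∈ w.support) :
    IsInducedCycleW G (w.rotate s hs) := by
  rw [isInducedCycleW_iff_isCycle_and_isChordless, Walk.isChordless_iff_forall_mem_edges] at hw ⊢
  exact ⟨hw.1.rotate hs, by simpa [(w.rotate_edges s hs).perm.mem_iff] using hw.2⟩

theorem eq_snd_or_eq_penultimate_of_isCycle (hw : w.IsCycle) (ht : s(u, t) ∈ w.edges) :
    t = w.snd ∨ t = w.penultimate := by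
  obtain _ | ⟨h, q⟩ := w
  · simp at ht
  rw [Walk.cons_isCycle_iff] at hw
  rcases List.mem_cons.1 ht with ht | ht
  · exact .inl (by simpa [h.ne] using ht)
  · have hq : ¬ q.Nil := fun hq ↦ h.ne hq.eq.symm
    rw [Walk.penultimate_cons_of_not_nil h q hq]
    exact .inr (hw.1.eq_penultimate_of_mem_edges ht)

theorem IsInducedCycleW.exists_cons_of_mem_edges (hw : IsInducedCycleW G w)
    (hst : s(s, t) ∈ w.edges) :
    ∃ (h : G.Adj s t) (q : G.Walk t s),
      IsInducedCycleW G (.cons h q) ∧ q.length + 1 = w.length := by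
  classical
  suffices ∃ w' : G.Walk s s, w'.snd = t ∧ IsInducedCycleW G w' ∧ w'.length = w.length by
    obtain ⟨w' | ⟨h, q⟩, ht, hw', hlen⟩ := this
    · exact (hw'.1.not_nil .nil).elim
    · obtain rfl : _ = t := by simpa using ht
      exact ⟨h, q, hw', hlen⟩
  have hs := w.fst_mem_support_of_mem_edges hst
  have hcycle := hw.rotate hs
  have ht : s(s, t) ∈ (w.rotate s hs).edges := (w.rotate_edges s hs).perm.mem_iff.2 hst
  rcases eq_snd_or_eq_penultimate_of_isCycle hcycle.1 ht with ht | ht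
  · exact ⟨_, ht.symm, hcycle, w.length_rotate s hs⟩
  · exact ⟨_, by simp [ht], hcycle.reverse, by simp⟩

theorem IsInducedCycleW.exists_isPath_of_mem_edges (hw : IsInducedCycleW G w)
    (hst : s(s, t) ∈ w.edges) :
    ∃ (a b : V) (p : G.Walk a b), p.IsPath ∧ p.IsChordless ∧ p.length + 3 = w.length ∧
      G.Adj t a ∧ G.Adj s b ∧ s ∉ p.support ∧ t ∉ p.support ∧
      (∀ z ∈ p.support, G.Adj t z → z = a) ∧ ∀ z ∈ p.support, G.Adj s z → z = b := by
  obtain ⟨h, q, hq, hlen⟩ := hw.exists_cons_of_mem_edges hst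
  have := hw.1.three_le_length
  obtain _ | @⟨_, a, _, hta, q⟩ := q
  · simp only [Walk.length_nil] at hlen
    lia
  obtain _ | ⟨hq₂, q⟩ := q
  · simp only [Walk.length_cons, Walk.length_nil] at hlen
    lia
  obtain ⟨b, p, hbs, hp⟩ := Walk.exists_cons_eq_concat hq₂ q
  rw [hp, isInducedCycleW_iff_isCycle_and_isChordless] at hq
  obtain ⟨hcycle, hc⟩ := hq
  simp only [Walk.cons_isCycle_iff, Walk.cons_isPath_iff, Walk.concat_isPath_iff,
    Walk.support_concat] at hcycle
  obtain ⟨⟨⟨hpath, hsp⟩, htp⟩, -⟩ := hcycle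
  replace htp : t ∉ p.support := by simp_all
  have ne_of_mem {z : V} (hz : z ∈ p.support) : z ≠ s ∧ z ≠ t :=
    ⟨ne_of_mem_of_not_mem hz hsp, ne_of_mem_of_not_mem hz htp⟩
  have hedges {x y : V} (hx : x ∈ p.support) (hy : y = s ∨ y = t ∨ y ∈ p.support)
      (hxy : G.Adj x y) : y = t ∧ x = a ∨ y = s ∧ x = b ∨ s(x, y) ∈ p.edges := by
    have := hc.mem_edges (u' := x) (v' := y) (by simp [Walk.support_concat, hx])
      (by simpa [Walk.support_concat, or_comm, or_left_comm] using hy) hxy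
    simp only [Walk.edges_cons, Walk.edges_concat, List.concat_eq_append, List.mem_cons, Sym2.eq,
      Sym2.rel_iff', Prod.mk.injEq, Prod.swap_prod_mk, ne_of_mem hx, false_and, or_self, false_or,
      List.mem_append, List.not_mem_nil, or_false] at this
    tauto
  refine ⟨a, b, p, hpath, Walk.isChordless_iff_forall_mem_edges.2 fun x y hx hy hxy ↦ ?_,
    ?_, hta, hbs.symm, hsp, htp, fun z hz htz ↦ ?_, fun z hz hsz ↦ ?_⟩
  · simpa [ne_of_mem hy] using hedges hx (.inr (.inr hy)) hxy
  · simpa [hp] using hlen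
  · simpa [h.ne', mt p.snd_mem_support_of_mem_edges htp] using hedges hz (.inr (.inl rfl)) htz.symm
  · simpa [h.ne, mt p.snd_mem_support_of_mem_edges hsp] using hedges hz (.inl rfl) hsz.symm

theorem eq_zero_and_eq_length_of_getVert_eq (hw : w.IsCycle) {i j : ℕ} (hij : i < j)
    (hj : j ≤ w.length) (h : w.getVert i = w.getVert j) : i = 0 ∧ j = w.length := by
  have hi : i = 0 := by
    by_contra hi
    exact hij.ne (hw.getVert_injOn ⟨by lia, by lia⟩ ⟨by lia, hj⟩ h)
  refine ⟨hi, ?_⟩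
  by_contra hj'
  exact hij.ne (hw.getVert_injOn' (show i ≤ w.length - 1 by lia) (show j ≤ w.length - 1 by lia) h)

theorem min_sub_le_one_of_mem_edges (hw : w.IsCycle) {i j : ℕ} (hij : i < j) (hj : j ≤ w.length)
    (h : s(w.getVert i, w.getVert j) ∈ w.edges) : min (j - i) (w.length - (j - i)) ≤ 1 := by
  obtain ⟨k, hk, hkij⟩ := w.mk_mem_edges_iff_exists.1 h
  have eq_or {m n : ℕ} (hm : m ≤ w.length) (hn : n ≤ w.length) (hmn : w.getVert m = w.getVert n) :
      m = n ∨ m = 0 ∧ n = w.length ∨ m = w.length ∧ n = 0 := by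
    rcases lt_trichotomy m n with h | rfl | h
    · exact .inr (.inl (eq_zero_and_eq_length_of_getVert_eq hw h hn hmn))
    · exact .inl rfl
    · exact .inr (.inr (eq_zero_and_eq_length_of_getVert_eq hw h hm hmn.symm).symm)
  rcases Sym2.eq_iff.1 hkij with ⟨h₁, h₂⟩ | ⟨h₁, h₂⟩
  · have := eq_or hk.le (hij.le.trans hj) h₁
    have := eq_or hk hj h₂
    lia
  · have := eq_or hk.le hj h₁
    have := eq_or hk (hij.le.trans hj) h₂
    lia

end InducedCycles

section OddChords

variable {G : SimpleGraph V} {u v x : V}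

theorem hasOddChord_iff {w : G.Walk u u} :
    HasOddChord G w ↔ ∃ i j, i < j ∧ j ≤ w.length ∧ G.Adj (w.getVert i) (w.getVert j) ∧
      Odd (min (j - i) (w.length - (j - i))) ∧ 1 < min (j - i) (w.length - (j - i)) := by
  simp only [HasOddChord, List.get_eq_getElem, Walk.support_getElem_eq_getVert,
    Walk.length_support, Nat.lt_succ_iff]
  constructor
  · rintro ⟨i, j, -, hj, hij, h⟩
    exact ⟨i, j, hij, hj, h⟩
  · rintro ⟨i, j, hij, hj, h⟩
    exact ⟨i, j, hij.le.trans hj, hj, hij, h⟩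

theorem HasOddChord.append_swap {p : G.Walk u v} {q : G.Walk v u}
    (h : HasOddChord G (q.append p)) : HasOddChord G (p.append q) := by
  have getVert_swap {i : ℕ} (hi : i ≤ q.length + p.length) :
      (q.append p).getVert i =
        (p.append q).getVert (if i < q.length then p.length + i else i - q.length) := by
    rw [Walk.getVert_append]
    split_ifs
    · simp [Walk.getVert_append]
    · rw [Walk.getVert_append', if_pos (by lia)]
  obtain ⟨i, j, hij, hj, hadj, hodd, hlt⟩ := hasOddChord_iff.1 h
  rw [Walk.length_append] at hj hodd hlt
  rw [getVert_swap (by lia), getVert_swap hj] at hadj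
  rw [hasOddChord_iff, Walk.length_append]
  split_ifs at hadj with hiq hjq
  · exact ⟨_, _, by lia, by lia, hadj, by convert hodd using 1; lia, by lia⟩
  · exact ⟨_, _, by lia, by lia, hadj.symm, by convert hodd using 1; lia, by lia⟩
  · lia
  · exact ⟨_, _, by lia, by lia, hadj, by convert hodd using 1; lia, by lia⟩

theorem HasOddChord.of_rotate [DecidableEq V] {w : G.Walk u u} (hx : x ∈ w.support)
    (h : HasOddChord G (w.rotate x hx)) : HasOddChord G w :=
  w.take_spec hx ▸ HasOddChord.append_swap h

end OddChords

section ReachableIn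

variable {G : SimpleGraph V} {R : Set V} {u v w : V}

/-- `v` can be reached from `u` by a walk of `G` all of whose vertices lie in `R`. -/
def ReachableIn (G : SimpleGraph V) (R : Set V) (u v : V) : Prop :=
  ∃ q : G.Walk u v, ∀ x ∈ q.support, x ∈ R

theorem ReachableIn.symm (h : ReachableIn G R u v) : ReachableIn G R v u := by
  obtain ⟨q, hq⟩ := h
  exact ⟨q.reverse, by simpa using hq⟩

theorem ReachableIn.trans (huv : ReachableIn G R u v) (hvw : ReachableIn G R v w) :
    ReachableIn G R u w := by
  obtain ⟨p, hp⟩ := huv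
  obtain ⟨q, hq⟩ := hvw
  exact ⟨p.append q, fun x hx ↦ ((Walk.mem_support_append_iff _ _).1 hx).elim (hp x) (hq x)⟩

theorem ReachableIn.mem_right (h : ReachableIn G R u v) : v ∈ R :=
  let ⟨q, hq⟩ := h
  hq v q.end_mem_support

theorem ReachableIn.trans_adj (huv : ReachableIn G R u v) (hvw : G.Adj v w) (hw : w ∈ R) :
    ReachableIn G R u w :=
  huv.trans ⟨hvw.toWalk, by simp [huv.mem_right, hw]⟩

end ReachableIn

section TotallyBalanced

variable {α β : Type*} {M : α → β → Prop}

/-- The bipartite graph between points and blocks in which `x` is joined to `e` when `M x e`. -/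
def incidenceGraph (M : α → β → Prop) : SimpleGraph (α ⊕ β) where
  Adj
    | .inl x, .inr e | .inr e, .inl x => M x e
    | _, _ => False
  symm.symm
    | .inl _, .inr _, h | .inr _, .inl _, h => h
  loopless.irrefl
    | .inl _, h | .inr _, h => h

@[simp] theorem incidenceGraph_adj_inl_inr {x : α} {e : β} :
    (incidenceGraph M).Adj (.inl x) (.inr e) ↔ M x e := .rfl

@[simp] theorem incidenceGraph_adj_inr_inl {x : α} {e : β} :
    (incidenceGraph M).Adj (.inr e) (.inl x) ↔ M x e := .rfl

@[simp] theorem not_incidenceGraph_adj_inl_inl {x y : α} :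
    ¬ (incidenceGraph M).Adj (.inl x) (.inl y) := id

@[simp] theorem not_incidenceGraph_adj_inr_inr {e f : β} :
    ¬ (incidenceGraph M).Adj (.inr e) (.inr f) := id

theorem even_length_iff_isLeft_iff_isLeft {v w : α ⊕ β} (p : (incidenceGraph M).Walk v w) :
    Even p.length ↔ (v.isLeft ↔ w.isLeft) :=
  (Coloring.mk Sum.isLeft fun {x y} h ↦ by cases x <;> cases y <;> simp_all).even_length_iff_congr p

theorem isLeft_ne_isLeft_of_adj {v w : α ⊕ β}
    (h : (incidenceGraph M).Adj v w) : v.isLeft ≠ w.isLeft := by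
  cases v <;> cases w <;> simp_all

theorem even_iff_isLeft_iff_isLeft_getVert {v w : α ⊕ β}
    (p : (incidenceGraph M).Walk v w) {i : ℕ} (hi : i ≤ p.length) :
    Even i ↔ (v.isLeft ↔ (p.getVert i).isLeft) := by
  simpa [hi] using even_length_iff_isLeft_iff_isLeft (p.take i)

/-- `M` is totally balanced: its incidence graph has no induced cycle of length at least six. -/
def TotallyBalanced (M : α → β → Prop) : Prop :=
  ¬ ∃ (u : α ⊕ β) (w : (incidenceGraph M).Walk u u),
    IsInducedCycleW (incidenceGraph M) w ∧ 6 ≤ w.length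

/-- A nest point of `X`: the traces on `X` of the blocks through `x` form a chain. -/
def IsNestPoint (M : α → β → Prop) (X : Set α) (x : α) : Prop :=
  ∀ e f, M x e → M x f → (∀ y ∈ X, M y e → M y f) ∨ ∀ y ∈ X, M y f → M y e

theorem TotallyBalanced.exists_common_block_mem_support (hM : TotallyBalanced M) {a b : α} {e : β}
    (hae : M a e) (hbe : M b e) (hab : a ≠ b) (q : (incidenceGraph M).Walk (.inl a) (.inl b))
    (he : .inr e ∉ q.support) (hadj : ∀ x, .inl x ∈ q.support → M x e → x = a ∨ x = b) :
    ∃ h, .inr h ∈ q.support ∧ M a h ∧ M b h := by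
  obtain ⟨p, hp, hc, hpq⟩ := exists_isPath_isChordless_support_subset q
  have hcycle := isInducedCycleW_cons_concat hp hc
    (incidenceGraph_adj_inr_inl.2 hae) (incidenceGraph_adj_inl_inr.2 hbe) (by simpa)
    (fun h ↦ he (hpq h)) (by
      rintro (x | f) hx h
      · simpa using hadj x (hpq hx) h
      · exact h.elim)
  have hlen : p.length < 4 := by
    by_contra! h
    exact hM ⟨_, _, hcycle, by simpa using h⟩
  have heven : Even p.length := (even_length_iff_isLeft_iff_isLeft p).2 .rfl
  have hpos : p.length ≠ 0 := fun h ↦ hab (Sum.inl_injective (Walk.eq_of_length_eq_zero h))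
  have htwo : p.length = 2 := by grind
  have ha : (incidenceGraph M).Adj (.inl a) (p.getVert 1) := by
    simpa using p.adj_getVert_succ (i := 0) (by lia)
  have hb : (incidenceGraph M).Adj (p.getVert 1) (.inl b) := by
    simpa [← htwo] using p.adj_getVert_succ (i := 1) (by lia)
  have hmem := hpq (p.getVert_mem_support 1)
  generalize p.getVert 1 = z at ha hb hmem
  obtain x | h := z
  · exact ha.elim
  · exact ⟨h, hmem, ha, hb⟩

theorem exists_mem_support_forall_eq_of_isChordless {a : α} {h : β}
    {p : (incidenceGraph M).Walk (.inr h) (.inl a)} (hp : p.IsPath) (hc : p.IsChordless) :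
    ∃ g, .inr g ∈ p.support ∧ M a g ∧ ∀ f, .inr f ∈ p.support → M a f → f = g := by
  have eq_penultimate (f : β) (hf : .inr f ∈ p.support) (haf : M a f) : .inr f = p.penultimate :=
    hp.eq_penultimate_of_mem_edges (hc.mem_edges p.end_mem_support hf haf)
  have hadj := p.adj_penultimate (Walk.not_nil_of_ne (by simp))
  have hmem : p.penultimate ∈ p.support := p.getVert_mem_support _
  generalize p.penultimate = z at *
  obtain x | g := z
  · exact hadj.elim
  · exact ⟨g, hmem, hadj, fun f hf haf ↦ Sum.inr_injective (eq_penultimate f hf haf)⟩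

theorem TotallyBalanced.exists_block_forall_mem (hM : TotallyBalanced M) {R : Set (α ⊕ β)}
    {r : α ⊕ β} {e : β} (he : .inr e ∉ R) (hR : ∀ x, .inl x ∈ R → ¬ M x e)
    (hr : ∃ f, ReachableIn (incidenceGraph M) R r (.inr f)) (T : Finset α)
    (hT : ∀ a ∈ T, M a e ∧ ∃ f, ReachableIn (incidenceGraph M) R r (.inr f) ∧ M a f) :
    ∃ h, ReachableIn (incidenceGraph M) R r (.inr h) ∧ ∀ a ∈ T, M a h := by
  classical
  induction T using Finset.induction_on with
  | empty => simpa using hr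
  | insert a T haT ih =>
    simp only [Finset.forall_mem_insert] at hT ⊢
    obtain ⟨h, hrh, hTh⟩ := ih hT.2
    obtain ⟨⟨hae, f, hrf, haf⟩, hT⟩ := hT
    obtain ⟨q, hq⟩ := hrh.symm.trans hrf
    obtain ⟨p, hp, hc, hpq⟩ := exists_isPath_isChordless_support_subset
      (q.concat (incidenceGraph_adj_inr_inl.2 haf))
    replace hpq {x} (hx : x ∈ p.support) : x ∈ q.support ∨ x = .inl a := by
      simpa [Walk.support_concat] using hpq hx
    obtain ⟨g, hgp, hag, hg⟩ := exists_mem_support_forall_eq_of_isChordless hp hc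
    have hgq : .inr g ∈ q.support := by simpa using hpq hgp
    refine ⟨g, hrh.trans ⟨q.takeUntil _ hgq, fun x hx ↦ hq x ?_⟩, hag, fun b hbT ↦ ?_⟩
    · exact q.support_takeUntil_subset_support hgq hx
    obtain ⟨h', hh'p, hbh', hah'⟩ := hM.exists_common_block_mem_support (hT b hbT).1 hae
      (fun hba ↦ haT (hba ▸ hbT)) (.cons (incidenceGraph_adj_inl_inr.2 (hTh b hbT)) p)
      (fun hmem ↦ he (hq _ (by simpa using hpq (x := .inr e) (by simpa using hmem))))
      (fun x hx hxe ↦ by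
        rcases List.mem_cons.1 hx with hxb | hxp
        · exact .inl (Sum.inl_injective hxb)
        · exact (hpq hxp).elim (fun hxq ↦ (hR x (hq _ hxq) hxe).elim)
            fun hxa ↦ .inr (Sum.inl_injective hxa))
    rwa [← hg h' (by simpa using hh'p) hah']

theorem IsNestPoint.of_subset {X Y : Set α} {x : α} (h : IsNestPoint M Y x)
    (hXY : ∀ f, M x f → (∀ y ∈ X, M y f) ∨ ∀ y ∈ X, M y f → y ∈ Y) : IsNestPoint M X x := by
  intro e f he hf
  rcases hXY e he with he' | he'
  · exact .inr fun y hy _ ↦ he' y hy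
  rcases hXY f hf with hf' | hf'
  · exact .inl fun y hy _ ↦ hf' y hy
  · exact (h e f he hf).imp (fun hef y hy hye ↦ hef y (he' y hy hye) hye)
      fun hfe y hy hyf ↦ hfe y (hf' y hy hyf) hyf

/-- The part of the incidence graph of `M` lying beyond the block `e` in `X`: the points of `X`
outside `e`, and the blocks that contain such a point without containing all of `X`. -/
def regionBeyond (M : α → β → Prop) (X : Set α) (e : β) : Set (α ⊕ β) :=
  {v | Sum.elim (fun y ↦ y ∈ X ∧ ¬ M y e)
    (fun f ↦ (∃ y ∈ X, ¬ M y f) ∧ ∃ y ∈ X, M y f ∧ ¬ M y e) v}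

@[simp] theorem inl_mem_regionBeyond {X : Set α} {e : β} {y : α} :
    .inl y ∈ regionBeyond M X e ↔ y ∈ X ∧ ¬ M y e := .rfl

@[simp] theorem inr_mem_regionBeyond {X : Set α} {e f : β} :
    .inr f ∈ regionBeyond M X e ↔ (∃ y ∈ X, ¬ M y f) ∧ ∃ y ∈ X, M y f ∧ ¬ M y e := .rfl

theorem TotallyBalanced.exists_mem_forall_not_mem_of_reachableIn (hM : TotallyBalanced M)
    {X : Finset α} {e : β}
    (hmax : ∀ f, (∃ x ∈ X, ¬ M x f) → (∀ x ∈ X, M x e → M x f) → ∀ x ∈ X, M x f → M x e)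
    {r : α ⊕ β}
    (hr : ∃ f, ReachableIn (incidenceGraph M) (regionBeyond M X e) r (.inr f)) :
    ∃ y ∈ X, ∀ f, ReachableIn (incidenceGraph M) (regionBeyond M X e) r (.inr f) → ¬ M y f := by
  classical
  by_contra! hcov
  obtain ⟨h, hrh, hh⟩ := hM.exists_block_forall_mem (R := regionBeyond M X e) (e := e)
    (by simp +contextual) (by simp) hr {x ∈ X | M x e} (by simp +contextual [hcov])
  obtain ⟨hfull, y, hy, hyh, hye⟩ := inr_mem_regionBeyond.1 hrh.mem_right
  exact hye (hmax h hfull (by simpa using hh) y hy hyh)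

theorem exists_maximal_trace {X : Finset α} {e₀ : β} (h₀ : ∃ x ∈ X, ¬ M x e₀) :
    ∃ e, (∃ x ∈ X, ¬ M x e) ∧ (∀ x ∈ X, M x e₀ → M x e) ∧
      ∀ f, (∃ x ∈ X, ¬ M x f) → (∀ x ∈ X, M x e → M x f) → ∀ x ∈ X, M x f → M x e := by
  classical
  obtain ⟨e, ⟨he, hsub⟩, hmin⟩ := exists_minimalFor_of_wellFoundedLT
    (fun e ↦ (∃ x ∈ X, ¬ M x e) ∧ ∀ x ∈ X, M x e₀ → M x e)
    (fun e ↦ {x ∈ X | ¬ M x e}) ⟨e₀, h₀, fun _ _ ↦ id⟩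
  refine ⟨e, he, hsub, fun f hf hef x hx hxf ↦ ?_⟩
  by_contra hxe
  have := hmin ⟨hf, fun y hy hy₀ ↦ hef y hy (hsub y hy hy₀)⟩
    (Finset.monotone_filter_right X fun y hy hyf hye ↦ hyf (hef y hy hye))
  simpa [hx, hxe, hxf] using this (Finset.mem_filter.2 ⟨hx, hxe⟩)

theorem TotallyBalanced.exists_isNestPoint (hM : TotallyBalanced M) (X : Finset α) (e₀ : β)
    (h₀ : ∃ x ∈ X, ¬ M x e₀) : ∃ x ∈ X, ¬ M x e₀ ∧ IsNestPoint M X x := by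
  classical
  induction X using Finset.strongInduction generalizing e₀ with
  | H X ih =>
  obtain ⟨e, ⟨x₀, hx₀, hx₀e⟩, he₀, hmax⟩ := exists_maximal_trace h₀
  suffices ∃ x ∈ X, ¬ M x e ∧ IsNestPoint M X x from
    this.imp fun x ⟨hx, hxe, hnest⟩ ↦ ⟨hx, fun hx' ↦ hxe (he₀ x hx hx'), hnest⟩
  by_cases hfull : ∀ f, M x₀ f → ∀ y ∈ X, M y f
  · exact ⟨x₀, hx₀, hx₀e, fun _ f _ hf ↦ .inl fun y hy _ ↦ hfull f hf y hy⟩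
  push Not at hfull
  obtain ⟨f₀, hx₀f₀, hf₀⟩ := hfull
  let Reach := ReachableIn (incidenceGraph M) (regionBeyond M X e) (.inl x₀)
  have reach_of_mem {x : α} {f : β} (hx : Reach (.inl x)) (hxf : M x f) (hf : ∃ y ∈ X, ¬ M y f) :
      Reach (.inr f) := by
    obtain ⟨hxX, hxe⟩ := inl_mem_regionBeyond.1 hx.mem_right
    exact hx.trans_adj (incidenceGraph_adj_inl_inr.2 hxf) ⟨hf, x, hxX, hxf, hxe⟩
  have hreach₀ : Reach (.inr f₀) := reach_of_mem ⟨.nil, by simp [hx₀, hx₀e]⟩ hx₀f₀ hf₀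
  let Y := {y ∈ X | ∃ f, Reach (.inr f) ∧ M y f}
  have hYX : Y ⊂ X := by
    obtain ⟨y, hy, hyf⟩ := hM.exists_mem_forall_not_mem_of_reachableIn hmax ⟨f₀, hreach₀⟩
    exact Finset.filter_ssubset.2 ⟨y, hy, fun ⟨f, hf, hyf'⟩ ↦ hyf f hf hyf'⟩
  obtain ⟨x, hxY, hxe, hnest⟩ := ih Y hYX e
    ⟨x₀, Finset.mem_filter.2 ⟨hx₀, f₀, hreach₀, hx₀f₀⟩, hx₀e⟩
  obtain ⟨hx, g, hg, hxg⟩ := Finset.mem_filter.1 hxY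
  have hreach : Reach (.inl x) := hg.trans_adj (incidenceGraph_adj_inr_inl.2 hxg) ⟨hx, hxe⟩
  refine ⟨x, hx, hxe, hnest.of_subset fun f hxf ↦ ?_⟩
  by_cases hf : ∃ y ∈ X, ¬ M y f
  · exact .inr fun y hy hyf ↦ by
      simpa [Y] using ⟨hy, f, reach_of_mem hreach hxf hf, hyf⟩
  · push Not at hf
    exact .inl hf

end TotallyBalanced

section ClosedAdj

variable {G : SimpleGraph V} {x : V}

/-- Membership of `x` in the closed neighbourhood of `e`, as a relation between points and blocks
that are both indexed by the vertices of `G`. -/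
def ClosedAdj (G : SimpleGraph V) (x e : V) : Prop :=
  x ∈ closedNbhd G e

theorem closedAdj_iff {e : V} : ClosedAdj G x e ↔ x = e ∨ G.Adj x e := by
  simp [ClosedAdj, closedNbhd, G.adj_comm]

theorem closedAdj_comm (G : SimpleGraph V) (x y : V) : ClosedAdj G x y ↔ ClosedAdj G y x := by
  simp [closedAdj_iff, G.adj_comm, eq_comm]

theorem adj_elim_id_iff {y z : V ⊕ V} (h : Sum.elim id id y ≠ Sum.elim id id z)
    (hyz : y.isLeft ≠ z.isLeft) :
    G.Adj (Sum.elim id id y) (Sum.elim id id z) ↔ (incidenceGraph (ClosedAdj G)).Adj y z := by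
  obtain y | y := y <;> obtain z | z := z <;> simp_all [closedAdj_iff, G.adj_comm, eq_comm]

theorem exists_walk_support_subset_map {y z : V ⊕ V}
    (p : (incidenceGraph (ClosedAdj G)).Walk y z) :
    ∃ q : G.Walk (Sum.elim id id y) (Sum.elim id id z),
      q.support ⊆ p.support.map (Sum.elim id id) := by
  induction p with
  | nil => exact ⟨.nil, by simp⟩
  | @cons y y' z h p ih =>
    obtain ⟨q, hq⟩ := ih
    by_cases hy : Sum.elim id id y = Sum.elim id id y'
    · exact ⟨q.copy hy.symm rfl, by simpa using List.subset_cons_of_subset _ hq⟩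
    · have hadj := (adj_elim_id_iff hy (isLeft_ne_isLeft_of_adj h)).2 h
      exact ⟨.cons hadj q, by simpa using List.cons_subset_cons _ hq⟩

theorem Chordal.notMem_edges_of_isInducedCycleW (hG : Chordal G) {u : V ⊕ V}
    {w : (incidenceGraph (ClosedAdj G)).Walk u u}
    (hw : IsInducedCycleW (incidenceGraph (ClosedAdj G)) w) (hlen : 6 ≤ w.length) (v : V) :
    s(.inr v, .inl v) ∉ w.edges := by
  intro hv
  obtain ⟨a | a, b | b, p, hp, hc, hplen, ha, hb, hr, hl, hal, hbr⟩ :=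
    hw.exists_isPath_of_mem_edges hv
  · exact ha.elim
  · exact ha.elim
  · have ne_of_mem {y : V ⊕ V} (hy : y ∈ p.support) : Sum.elim id id y ≠ v := by
      rintro rfl
      obtain y | y := y
      · exact hl hy
      · exact hr hy
    have hav : a ≠ v := ne_of_mem p.start_mem_support
    have hbv : b ≠ v := ne_of_mem p.end_mem_support
    have hab : ¬ ClosedAdj G b a := fun hab ↦ by
      have := hp.length_eq_one_of_mem_edges
        (hc.mem_edges p.start_mem_support p.end_mem_support (incidenceGraph_adj_inr_inl.2 hab))
      lia
    obtain ⟨q, hq⟩ := exists_walk_support_subset_map p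
    simp only [incidenceGraph_adj_inl_inr, incidenceGraph_adj_inr_inl, closedAdj_iff] at ha hb hab
    push Not at hab
    refine hab.2 (hG.adj_of_walk (v := v) (ha.resolve_left hav.symm) (hb.resolve_left hbv).symm
      hab.1.symm q ?_ ?_).symm
    · intro hvq
      obtain ⟨y, hy, hyv⟩ := List.mem_map.1 (hq hvq)
      exact ne_of_mem hy hyv
    · intro x hx hvx
      obtain ⟨y | y, hy, rfl⟩ := List.mem_map.1 (hq hx)
      · exact .inr (Sum.inl_injective (hbr _ hy (closedAdj_iff.2 (.inr hvx.symm))))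
      · exact .inl (Sum.inr_injective (hal _ hy (closedAdj_iff.2 (.inr hvx))))
  · exact hb.elim

theorem StronglyChordal.totallyBalanced_closedAdj (hG : StronglyChordal G) :
    TotallyBalanced (ClosedAdj G) := by
  rintro ⟨u, w, hw, hlen⟩
  have hsymm := hG.1.notMem_edges_of_isInducedCycleW hw hlen
  obtain ⟨hcycle, hc⟩ := isInducedCycleW_iff_isCycle_and_isChordless.1 hw
  have hinj : Set.InjOn (Sum.elim id id) {y | y ∈ w.support} := by
    rintro (y | y) hy (z | z) hz h <;> obtain rfl : y = z := h
    · rfl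
    · exact (hsymm y (hc.mem_edges hz hy (closedAdj_iff.2 (.inl rfl)))).elim
    · exact (hsymm y (hc.mem_edges hy hz (closedAdj_iff.2 (.inl rfl)))).elim
    · rfl
  have hedges : ∀ e ∈ w.edges, e ∈ (G.comap (Sum.elim id id)).edgeSet := by
    intro e he
    induction e with | _ y z
    have hyz := w.adj_of_mem_edges he
    exact (adj_elim_id_iff (hinj.ne (w.fst_mem_support_of_mem_edges he)
      (w.snd_mem_support_of_mem_edges he) hyz.ne) (isLeft_ne_isLeft_of_adj hyz)).2 hyz
  have heven : Even w.length := (even_length_iff_isLeft_iff_isLeft w).2 .rfl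
  have hcycle' : ((w.transfer _ hedges).map ⟨Sum.elim id id, id⟩).IsCycle :=
    isCycle_map_of_injOn (hcycle.transfer hedges) _ (by rwa [Walk.support_transfer])
  obtain ⟨i, j, hij, hj, hadj, hodd, hlt⟩ := hasOddChord_iff.1
    (hG.2 _ _ hcycle' (by simpa using heven) (by simpa using hlen))
  simp only [Walk.length_map, Walk.length_transfer, Walk.getVert_map, getVert_transfer]
    at hj hadj hodd hlt
  have hne : (w.getVert i).isLeft ≠ (w.getVert j).isLeft := by
    have hi := even_iff_isLeft_iff_isLeft_getVert w (hij.le.trans hj)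
    have hj := even_iff_isLeft_iff_isLeft_getVert w hj
    grind
  exact hlt.not_ge (min_sub_le_one_of_mem_edges hcycle hij hj
    (hc.mem_edges (w.getVert_mem_support i) (w.getVert_mem_support j)
      ((adj_elim_id_iff hadj.ne hne).1 hadj)))

end ClosedAdj

section SimpleVtx

variable {G : SimpleGraph V} {u : V}

theorem simpleVtx_induce_iff {S : Set V} {x : S} :
    SimpleVtx (G.induce S) x ↔ ∀ e ∈ S, ∀ f ∈ S, ClosedAdj G x e → ClosedAdj G x f →
      (∀ y ∈ S, ClosedAdj G y e → ClosedAdj G y f) ∨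
        ∀ y ∈ S, ClosedAdj G y f → ClosedAdj G y e := by
  have mem_closedNbhd (a b : S) : a ∈ closedNbhd (G.induce S) b ↔ ClosedAdj G a b := by
    simp [closedNbhd, closedAdj_iff, G.adj_comm, Subtype.ext_iff]
  simp only [SimpleVtx, Set.subset_def, mem_closedNbhd, Subtype.forall, closedAdj_comm G _ x.1]
  grind

theorem StronglyChordal.exists_simpleVtx (hG : StronglyChordal G) {S : Set V} (hfin : S.Finite)
    (hS : S.Nonempty) : ∃ x : S, SimpleVtx (G.induce S) x := by
  simp only [simpleVtx_induce_iff]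
  by_cases h : ∃ e, ∃ y ∈ hfin.toFinset, ¬ ClosedAdj G y e
  · obtain ⟨e₀, h₀⟩ := h
    obtain ⟨x, hx, -, hnest⟩ := hG.totallyBalanced_closedAdj.exists_isNestPoint hfin.toFinset e₀ h₀
    rw [hfin.coe_toFinset] at hnest
    exact ⟨⟨x, hfin.mem_toFinset.1 hx⟩, fun e _ f _ ↦ hnest e f⟩
  · push Not at h
    obtain ⟨x, hx⟩ := hS
    exact ⟨⟨x, hx⟩, fun e _ f _ _ _ ↦ .inl fun y hy _ ↦ h f y (hfin.mem_toFinset.2 hy)⟩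

theorem adj_getVert_of_simpleVtx {S : Set V} {x : S} (hx : SimpleVtx (G.induce S) x)
    {w : G.Walk (x : V) x} (hw : w.IsCycle) (hlen : 4 ≤ w.length) (hS : ∀ y ∈ w.support, y ∈ S) :
    G.Adj (w.getVert 1) (w.getVert (w.length - 1)) ∧
      (G.Adj (w.getVert 2) (w.getVert (w.length - 1)) ∨
        G.Adj (w.getVert 1) (w.getVert (w.length - 2))) := by
  have hmem (i : ℕ) : w.getVert i ∈ S := hS _ (w.getVert_mem_support i)
  have adj_of_closedAdj {i j : ℕ} (hi : 1 ≤ i) (hij : i < j) (hj : j ≤ w.length)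
      (h : ClosedAdj G (w.getVert i) (w.getVert j)) : G.Adj (w.getVert i) (w.getVert j) :=
    (closedAdj_iff.1 h).resolve_left fun h ↦ by
      have := (eq_zero_and_eq_length_of_getVert_eq hw hij hj h).1
      lia
  have closedAdj_of_succ {i j : ℕ} (hij : i + 1 = j) (hj : j ≤ w.length) :
      ClosedAdj G (w.getVert i) (w.getVert j) :=
    closedAdj_iff.2 (.inr (hij ▸ w.adj_getVert_succ (by lia)))
  have hx₁ : ClosedAdj G x (w.getVert 1) := by
    simpa using closedAdj_of_succ (i := 0) rfl (by lia)
  have hxl : ClosedAdj G x (w.getVert (w.length - 1)) := by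
    simpa [closedAdj_comm G x] using
      closedAdj_of_succ (i := w.length - 1) (j := w.length) (by lia) le_rfl
  rcases simpleVtx_induce_iff.1 hx _ (hmem 1) _ (hmem (w.length - 1)) hx₁ hxl with h | h
  · have h₁ := h _ (hmem 1) (closedAdj_iff.2 (.inl rfl))
    have h₂ := h _ (hmem 2) ((closedAdj_comm G _ _).1 (closedAdj_of_succ rfl (by lia)))
    exact ⟨adj_of_closedAdj (by lia) (by lia) (by lia) h₁,
      .inl (adj_of_closedAdj (by lia) (by lia) (by lia) h₂)⟩
  · have h₁ := h _ (hmem (w.length - 1)) (closedAdj_iff.2 (.inl rfl))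
    have h₂ := h _ (hmem (w.length - 2)) (closedAdj_of_succ (by lia) (by lia))
    exact ⟨adj_of_closedAdj (by lia) (by lia) (by lia) ((closedAdj_comm G _ _).1 h₁),
      .inr (adj_of_closedAdj (by lia) (by lia) (by lia) ((closedAdj_comm G _ _).1 h₂))⟩

theorem hasOddChord_of_simpleVtx {S : Set V} {x : S} (hx : SimpleVtx (G.induce S) x)
    {w : G.Walk u u} (hw : w.IsCycle) (hS : ∀ y ∈ w.support, y ∈ S) (hxw : (x : V) ∈ w.support)
    (heven : Even w.length) (hlen : 6 ≤ w.length) : HasOddChord G w := by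
  classical
  have hrotate := w.length_rotate x hxw
  obtain ⟨-, h⟩ := adj_getVert_of_simpleVtx hx (hw.rotate hxw) (by lia) (by simpa using hS)
  refine .of_rotate hxw (hasOddChord_iff.2 ?_)
  rw [hrotate] at h ⊢
  rw [Nat.even_iff] at heven
  simp only [Nat.odd_iff]
  rcases h with h | h
  · exact ⟨_, _, by lia, by lia, h, by lia, by lia⟩
  · exact ⟨_, _, by lia, by lia, h, by lia, by lia⟩

theorem IsInducedCycleW.length_lt_four_of_simpleVtx {w : G.Walk u u} (hw : IsInducedCycleW G w)
    {S : Set V} {x : S} (hx : SimpleVtx (G.induce S) x) (hS : ∀ y ∈ w.support, y ∈ S)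
    (hxw : (x : V) ∈ w.support) : w.length < 4 := by
  classical
  by_contra! hlen
  rw [← w.length_rotate x hxw] at hlen
  obtain ⟨hcycle, hc⟩ := isInducedCycleW_iff_isCycle_and_isChordless.1 (hw.rotate hxw)
  obtain ⟨hadj, -⟩ := adj_getVert_of_simpleVtx hx hcycle hlen (by simpa using hS)
  have := min_sub_le_one_of_mem_edges hcycle (by lia) (by lia)
    (hc.mem_edges (Walk.getVert_mem_support _ _) (Walk.getVert_mem_support _ _) hadj)
  lia

theorem strongly_chordal_iff_every_induced_subgraph_has_simple_vertex_general
    (G : SimpleGraph V) :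
    StronglyChordal G ↔
      ∀ S : Set V, S.Finite → S.Nonempty → ∃ v : S, SimpleVtx (G.induce S) v := by
  refine ⟨fun hG S ↦ hG.exists_simpleVtx, fun h ↦ ?_⟩
  have exists_simpleVtx_support {u : V} (w : G.Walk u u) :
      ∃ x : {y | y ∈ w.support}, SimpleVtx (G.induce {y | y ∈ w.support}) x :=
    h _ w.support.finite_toSet ⟨u, w.start_mem_support⟩
  constructor
  · rintro ⟨u, w, hw, hlen⟩
    obtain ⟨x, hx⟩ := exists_simpleVtx_support w
    exact hlen.not_gt (hw.length_lt_four_of_simpleVtx hx (fun _ ↦ id) x.2)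
  · intro u w hw heven hlen
    obtain ⟨x, hx⟩ := exists_simpleVtx_support w
    exact hasOddChord_of_simpleVtx hx hw (fun _ ↦ id) x.2 heven hlen

end SimpleVtx

/-- A finite simple graph `G` is strongly chordal if and only if every
induced subgraph of `G` on a nonempty vertex set contains a simple vertex. -/
theorem strongly_chordal_iff_every_induced_subgraph_has_simple_vertex
    {V : Type*} [Fintype V] (G : SimpleGraph V) :
    StronglyChordal G ↔ ∀ S : Set V, S.Nonempty → ∃ v : S, SimpleVtx (G.induce S) v := by
  simpa [Set.toFinite] using
    strongly_chordal_iff_every_induced_subgraph_has_simple_vertex_general G
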